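/- arXiv:0707.1108 — 3 statements merged into one kernel-verified Lean document; each statement's English description precedes it below -/
import Mathlib

section
/- Let p be a prime, let m > n > 0 be integers, and let a be a nonzero element of the prime field F_p. If the polynomial x^m + a x^n permutes F_p, then p < m · max(n, m−n). -/
/-!
Let `d = m - n`, `q = p - 1`, and suppose `m · max(n, d) ≤ p`. Since `p` is prime, equality would
force `m = p = 2`, where `0` and `1` have the same image; so `m · max(n, d) ≤ q`. Since `x ↦ x ^ g`
for `g = gcd(m, n)` must be injective, hence bijective, dividing both exponents by `g` keeps the map
bijective, and one may assume `gcd(m, n) = 1`.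

The contradiction is of Hermite type: the sum of the `k`-th powers of all values of the binomial
vanishes for `k < q`. Expanding, the term `x ^ (n i + m (k - i))` contributes to this sum only when
its exponent is a positive multiple of `q`. As `m` is coprime to `d`, some `k` among the `d` integers
starting with `⌈q / m⌉` satisfies `m k ≡ q (mod d)`. The bound on `m · max(n, d)` gives
`n k ≤ q ≤ m k < 2 q`, so exactly one exponent contributes, namely the one equal to `q`, with
coefficient `± C(k, j) a ^ j`. This is nonzero because `k < p`.
-/

/-- The power sums over `F_p` with positive exponent less than `2 (p - 1)`. -/
lemma sum_pow_zmod (p : ℕ) [Fact p.Prime] (e : ℕ) (he : 0 < e) (h2 : e < 2 * (p - 1)) :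
    ∑ x : ZMod p, x ^ e = if e = p - 1 then -1 else 0 := by
  classical
  have h1 : ∑ x : ZMod p, x ^ e = ∑ x : (ZMod p)ˣ, (x ^ e : ZMod p) := by
    rw [← Finset.sum_subset (Finset.subset_univ (Finset.univ.map
      (⟨fun x => x, Units.val_injective⟩ : (ZMod p)ˣ ↪ ZMod p))), Finset.sum_map]
    · rfl
    · intro x _ hx
      have : x = 0 := by
        by_contra h
        exact hx (Finset.mem_map.2 ⟨Units.mk0 x h, Finset.mem_univ _, rfl⟩)
      rw [this, zero_pow he.ne']
  rw [h1, FiniteField.sum_pow_units, ZMod.card]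
  congr 1
  refine propext ⟨fun h => ?_, fun h => h ▸ dvd_rfl⟩
  obtain ⟨c, rfl⟩ := h
  have hc : c < 2 := by
    by_contra! h
    nlinarith [Nat.mul_le_mul_left (p - 1) h]
  interval_cases c <;> simp_all

/-- The multiplier `k` for the Hermite sum, together with the index `j` of the single binomial term
of exponent `q`. -/
lemma exists_exponent (n d q : ℕ) (hn : 0 < n) (hd : 0 < d) (hq : 0 < q)
    (hc : Nat.Coprime (n + d) d) (h1 : (n + d) * n ≤ q) (h2 : (n + d) * d ≤ q) :
    ∃ k j, 0 < k ∧ j ≤ k ∧ (n + d) * k = q + d * j ∧ (n + d) * k < 2 * q := by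
  -- `r` is the excess of `m ⌈q / m⌉` over `q`, where `m = n + d`
  obtain ⟨k₀, r, hk₀, hr⟩ : ∃ k₀ r, (n + d) * k₀ = q + r ∧ r < n + d := by
    refine ⟨(q + (n + d) - 1) / (n + d), (n + d) - 1 - (q + (n + d) - 1) % (n + d), ?_, by omega⟩
    have h := Nat.div_add_mod (q + (n + d) - 1) (n + d)
    have h' := Nat.mod_lt (q + (n + d) - 1) (show 0 < n + d by omega)
    omega
  -- `(d - 1) * r` stands for `-r` modulo `d`
  obtain ⟨t, htd, ht⟩ := Nat.exists_mul_mod_eq_of_coprime ((d - 1) * r) hc hd.ne'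
  obtain ⟨j, hj⟩ : d ∣ r + (n + d) * t := by
    have h3 : r + (n + d) * t ≡ r + (d - 1) * r [MOD d] := Nat.ModEq.add_left _ ht
    have h4 : r + (d - 1) * r = d * r := by
      obtain ⟨d, rfl⟩ := Nat.exists_eq_succ_of_ne_zero hd.ne'
      simp; ring
    rw [h4] at h3
    exact (Nat.modEq_zero_iff_dvd.1 (h3.trans (Nat.modEq_zero_iff_dvd.2 ⟨r, rfl⟩)))
  have hmk : (n + d) * (k₀ + t) = q + d * j := by rw [← hj]; linarith
  have hb : (n + d) * (k₀ + t) + 1 ≤ q + (n + d) * d := by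
    have : (n + d) * (t + 1) ≤ (n + d) * d := Nat.mul_le_mul_left _ htd
    nlinarith
  have hnk : n * (k₀ + t) ≤ q := by
    have h5 : (n + d) * (n * (k₀ + t)) ≤ (n + d) * q := by
      have h6 : n * ((n + d) * (k₀ + t)) ≤ n * (q + (n + d) * d) :=
        Nat.mul_le_mul_left _ (by omega)
      have h7 := Nat.mul_le_mul_left d h1
      linarith
    exact Nat.le_of_mul_le_mul_left h5 (by omega)
  refine ⟨k₀ + t, j, ?_, ?_, hmk, by omega⟩
  · by_contra h
    obtain h0 : k₀ + t = 0 := by omega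
    rw [h0] at hmk
    omega
  · have h8 : d * j ≤ d * (k₀ + t) := by linarith
    exact Nat.le_of_mul_le_mul_left h8 hd

/-- The theorem for coprime exponents `n + d` and `n`: the sum of the `k`-th powers of the values is
zero for a bijection, but its expansion has the single nonzero term `-(a ^ j * C(k, j))`. -/
lemma not_bijective_of_coprime (p : ℕ) [Fact p.Prime] (n d : ℕ) (hn : 0 < n) (hd : 0 < d)
    (hc : Nat.Coprime (n + d) d) (h1 : (n + d) * n ≤ p - 1) (h2 : (n + d) * d ≤ p - 1)
    (a : ZMod p) (ha : a ≠ 0) :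
    ¬ Function.Bijective (fun x : ZMod p => x ^ (n + d) + a * x ^ n) := by
  intro hperm
  have hp := (Fact.out : p.Prime).two_le
  obtain ⟨k, j, hk, hjk, hmk, hlt⟩ := exists_exponent n d (p - 1) hn hd (by omega) hc h1 h2
  have hkq : k < p - 1 := by nlinarith
  have hsum : ∑ x : ZMod p, (a * x ^ n + x ^ (n + d)) ^ k = 0 := by
    have h := FiniteField.sum_pow_lt_card_sub_one (ZMod p) k (by rwa [ZMod.card])
    rw [← h, ← hperm.sum_comp (fun y => y ^ k)]
    simp only [add_comm]
  simp only [add_pow] at hsum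
  rw [Finset.sum_comm] at hsum
  have hterm : ∀ i ∈ Finset.range (k + 1),
      ∑ x : ZMod p, (a * x ^ n) ^ i * (x ^ (n + d)) ^ (k - i) * (k.choose i : ZMod p)
        = if i = j then -(a ^ i * (k.choose i : ZMod p)) else 0 := by
    intro i hi
    obtain ⟨l, rfl⟩ := Nat.exists_eq_add_of_le (Nat.lt_succ_iff.1 (Finset.mem_range.1 hi))
    have he : n * i + (n + d) * l + d * i = (p - 1) + d * j := by rw [← hmk]; ring
    have hpos : 0 < n * i + (n + d) * l := by nlinarith
    have hs := sum_pow_zmod p (n * i + (n + d) * l) hpos (by omega)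
    have hiff : n * i + (n + d) * l = p - 1 ↔ i = j := by
      constructor
      · intro h
        exact Nat.eq_of_mul_eq_mul_left hd (by omega)
      · rintro rfl
        omega
    calc _ = ∑ x : ZMod p, (a ^ i * ((i + l).choose i : ZMod p)) * x ^ (n * i + (n + d) * l) := by
          refine Finset.sum_congr rfl fun x _ => ?_
          rw [Nat.add_sub_cancel_left, pow_add x (n * i), pow_mul, pow_mul _ (n + d), mul_pow]
          ring
      _ = _ := by
          rw [← Finset.mul_sum, hs]
          simp only [hiff]
          split_ifs <;> simp
  rw [Finset.sum_congr rfl hterm, Finset.sum_ite_eq',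
    if_pos (Finset.mem_range.2 (by omega))] at hsum
  have hch : (k.choose j : ZMod p) ≠ 0 := by
    rw [Ne, ZMod.natCast_eq_zero_iff]
    intro h
    have h3 : p ∣ k.factorial := by
      rw [← Nat.choose_mul_factorial_mul_factorial hjk, mul_assoc]
      exact h.mul_right _
    have := ((Fact.out : p.Prime).dvd_factorial).1 h3
    omega
  exact neg_ne_zero.2 (mul_ne_zero (pow_ne_zero _ ha) hch) hsum

/-- Turnwald: if `x^m + a x^n` permutes the prime field `F_p` (with `m > n > 0`, `a ≠ 0`),
then `p < m · max(n, m-n)`. -/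
theorem permutation_binomial_Turnwald (p : ℕ) (hp : p.Prime) (m n : ℕ)
    (hn : 0 < n) (hnm : n < m) (a : ZMod p) (ha : a ≠ 0)
    (hperm : Function.Bijective (fun x : ZMod p => x ^ m + a * x ^ n)) :
    p < m * max n (m - n) := by
  have : Fact p.Prime := ⟨hp⟩
  by_contra! hle
  have hlt : m * max n (m - n) < p := by
    refine lt_of_le_of_ne hle fun heq => ?_
    have hmax : max n (m - n) = 1 := by
      rcases (Nat.prime_mul_iff.1 (heq ▸ hp)) with ⟨_, h⟩ | ⟨_, h⟩
      · exact h
      · omega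
    obtain rfl : n = 1 := by omega
    obtain rfl : m = 2 := by omega
    -- the polynomial `x ^ 2 + a x` has the two roots `0` and `-a`
    have h0 : (0 : ZMod p) = -a := hperm.1 (by simp; ring)
    exact ha (neg_eq_zero.1 h0.symm)
  obtain ⟨d, rfl⟩ := Nat.exists_eq_add_of_le hnm.le
  rw [Nat.add_sub_cancel_left] at hlt
  obtain ⟨g, n', d', hg, hcop, rfl, rfl⟩ := Nat.exists_coprime' (m := n) (n := d)
    (Nat.gcd_pos_of_pos_left _ hn)
  have hn' : 0 < n' := Nat.pos_of_mul_pos_right hn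
  have hd' : 0 < d' := Nat.pos_of_ne_zero (by rintro rfl; simp at hnm)
  have hfac : (fun x : ZMod p => x ^ (n' * g + d' * g) + a * x ^ (n' * g))
      = (fun x : ZMod p => x ^ (n' + d') + a * x ^ n') ∘ (fun x => x ^ g) := by
    funext x
    simp only [Function.comp, ← pow_mul]
    ring_nf
  rw [hfac] at hperm
  have hbij : Function.Bijective (fun x : ZMod p => x ^ (n' + d') + a * x ^ n') :=
    Finite.surjective_iff_bijective.1 hperm.2.of_comp
  have hm : ∀ c, c * g ≤ max (n' * g) (d' * g) → (n' + d') * c ≤ p - 1 := by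
    intro c hc
    have h1 : (n' + d') * c ≤ (n' * g + d' * g) * (c * g) := by
      rw [← add_mul]
      exact Nat.mul_le_mul (Nat.le_mul_of_pos_right _ hg) (Nat.le_mul_of_pos_right _ hg)
    have h2 := Nat.mul_le_mul_left (n' * g + d' * g) hc
    omega
  exact not_bijective_of_coprime p n' d' hn' hd' (by simpa using hcop)
    (hm _ (le_max_left _ _)) (hm _ (le_max_right _ _)) a ha hbij
end

section
/- The double sum E := Σ_q Σ_r q·(r!/r^r), where q ranges over all prime powers and, for each q, r ranges over the positive divisors of q−1 satisfying r > 2 log q (natural logarithm), converges to a finite value, and moreover E < 40. -/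
/-!
For fixed `r` put `x = exp (r / 2)`. The admissible `q` satisfy `q < x` and `q = r k + 1`, and by
Stirling `r! / r ^ r ≤ e √r exp (-r)`. Counting all such integers `q` bounds the contribution of
`r` by about `(e / 2) / √r`. This just fails to give a convergent sum, but it is good enough for
`r ≤ 48`, where an explicit evaluation gives at most `19` (`sum_rowSum_first`).

For `r ≥ 49` the density of primes enters through a Chebyshev argument in the progression `1` mod
`r`. With `n ≈ x / r`, the product of the `r k + 1` for `1 ≤ k ≤ n` is divisible by all primes
`q > n` in question, and also by `n!` up to prime factors of `r`; these are made up for by the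
factor `2 ^ n * r ^ (n / 2)` (`factorial_dvd_progression`). Comparing sizes gives
`∑ log q ≤ n (log (r + 1) + log 2 + (log r) / 2)` over the primes `q > n`. As `q ≤ (x / log x) log q`
and the remaining prime powers (those with `q ≤ n`, and the proper powers) are few, the row of `r`
contributes at most `e (3 log r + 3.2) / r ^ (3 / 2)`. This is at most the decrement from `r - 1`
to `r` of the function `e (6 log t + 19) / √t` (`rowSum_le_sub`), whose value at `48` is at most `18`.
Hence every finite partial sum is at most `37`, which yields both convergence and the bound.
-/


/-- The set of admissible pairs `(q, r)`: `q` a prime power and `r` a positive divisor of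
`q - 1` with `r > 2 log q`. -/
def HeuristicPairs : Set (ℕ × ℕ) :=
  {qr | IsPrimePow qr.1 ∧ 0 < qr.2 ∧ qr.2 ∣ qr.1 - 1 ∧ 2 * Real.log qr.1 < (qr.2 : ℝ)}

/-- The summand `q · r!/r^r`. -/
noncomputable def HeuristicSummand (qr : ℕ × ℕ) : ℝ :=
  (qr.1 : ℝ) * (Nat.factorial qr.2 : ℝ) / (qr.2 : ℝ) ^ qr.2

/-! ### A divisibility of Chebyshev type -/

/-- Primes not dividing `r` are absorbed by the progression product, since `r` is invertible
modulo their powers and a product of `n` consecutive integers is divisible by `n!`. The factor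
`2 ^ n * r ^ (n / 2)` takes care of the primes dividing `r`, by Legendre's formula. -/
lemma factorial_dvd_progression (r n : ℕ) :
    n.factorial ∣ (∏ k ∈ Finset.range n, (r * (k + 1) + 1)) * (2 ^ n * r ^ (n / 2)) := by
  rw [Nat.dvd_iff_prime_pow_dvd_dvd]
  intro p k hp hk
  have : Fact p.Prime := ⟨hp⟩
  by_cases hpr : p ∣ r
  · apply Dvd.dvd.mul_left
    have hle : k ≤ padicValNat p n.factorial :=
      (padicValNat_dvd_iff_le (Nat.factorial_ne_zero n)).1 hk
    have hleg := sub_one_mul_padicValNat_factorial (p := p) n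
    have h1 : (p - 1) * k ≤ n := by
      calc (p - 1) * k ≤ (p - 1) * padicValNat p n.factorial := Nat.mul_le_mul_left _ hle
        _ ≤ n := by rw [hleg]; exact Nat.sub_le _ _
    rcases hp.two_le.eq_or_lt with h2 | h2
    · subst h2
      exact Dvd.dvd.mul_right (pow_dvd_pow 2 (by omega)) _
    · have h3 : 2 * k ≤ n := le_trans (Nat.mul_le_mul_right k (by omega)) h1
      exact Dvd.dvd.mul_left
        ((pow_dvd_pow p (by omega)).trans (pow_dvd_pow_of_dvd hpr _)) _
  · apply Dvd.dvd.mul_right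
    rcases Nat.eq_zero_or_pos k with rfl | hk0
    · simp
    have hcop : Nat.Coprime r (p ^ k) :=
      ((Nat.Prime.coprime_iff_not_dvd hp).2 hpr).symm.pow_right k
    obtain ⟨s, -, hs⟩ := Nat.exists_mul_mod_eq_one_of_coprime hcop
      (Nat.one_lt_pow hk0.ne' hp.one_lt)
    have hs1 : r * s ≡ 1 [MOD p ^ k] := by
      rw [Nat.ModEq, hs, Nat.mod_eq_of_lt (Nat.one_lt_pow hk0.ne' hp.one_lt)]
    have hmod : ∏ j ∈ Finset.range n, (s * (r * (j + 1) + 1)) ≡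
        ∏ j ∈ Finset.range n, (s + 1 + j) [MOD p ^ k] := by
      have key : ∀ j, s * (r * (j + 1) + 1) ≡ s + 1 + j [MOD p ^ k] := by
        intro j
        have : s * (r * (j + 1) + 1) = r * s * (j + 1) + s := by ring
        rw [this]
        have h := (hs1.mul_right (j + 1)).add_right s
        convert h using 1
        ring
      exact Nat.ModEq.prod fun j _ => key j
    have h4 : p ^ k ∣ ∏ j ∈ Finset.range n, (s + 1 + j) := by
      rw [← Nat.ascFactorial_eq_prod_range]
      exact hk.trans (Nat.factorial_dvd_ascFactorial _ _)
    have h5 : p ^ k ∣ s ^ n * ∏ j ∈ Finset.range n, (r * (j + 1) + 1) := by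
      have h6 := (hmod.dvd_iff dvd_rfl).2 h4
      rwa [Finset.prod_mul_distrib, Finset.prod_const, Finset.card_range] at h6
    have hcs : Nat.Coprime (p ^ k) s := by
      apply Nat.Coprime.symm
      have : Nat.gcd (r * s) (p ^ k) = Nat.gcd 1 (p ^ k) := hs1.gcd_eq
      rw [Nat.gcd_one_left] at this
      exact Nat.Coprime.coprime_mul_left (k := r) this
    exact (hcs.pow_right n).dvd_of_dvd_mul_left h5

/-- Distinct primes exceeding `n` that occur as terms of the progression divide its product, and
they are coprime to `n!`; so the divisibility above leaves room for them, and comparing sizes via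
`r * k + 1 ≤ (r + 1) * k` bounds their product. -/
lemma prod_primes_progression_le (r n : ℕ) (hr : 0 < r) (P : Finset ℕ)
    (hP : ∀ q ∈ P, q.Prime ∧ n < q ∧ ∃ k, 0 < k ∧ k ≤ n ∧ q = r * k + 1) :
    ∏ q ∈ P, q ≤ (r + 1) ^ n * (2 ^ n * r ^ (n / 2)) := by
  set A := ∏ k ∈ Finset.range n, (r * (k + 1) + 1) with hA
  have hdvdA : ∏ q ∈ P, q ∣ A := by
    apply Finset.prod_primes_dvd
    · intro q hq
      exact (hP q hq).1.prime
    · intro q hq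
      obtain ⟨-, -, k, hk0, hkn, rfl⟩ := hP q hq
      have := Finset.dvd_prod_of_mem (fun k => r * (k + 1) + 1)
        (Finset.mem_range.2 (show k - 1 < n by omega))
      simpa [Nat.sub_add_cancel hk0] using this
  have hcop : Nat.Coprime n.factorial (∏ q ∈ P, q) := by
    apply Nat.Coprime.prod_right
    intro q hq
    exact ((Nat.coprime_factorial_iff (hP q hq).1.ne_one).2 (by
      rw [(hP q hq).1.minFac_eq]; exact (hP q hq).2.1)).symm
  have hdvd : n.factorial * ∏ q ∈ P, q ∣ A * (2 ^ n * r ^ (n / 2)) :=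
    hcop.mul_dvd_of_dvd_of_dvd (factorial_dvd_progression r n) (hdvdA.mul_right _)
  have hApos : 0 < A := Finset.prod_pos fun k _ => by positivity
  have hle := Nat.le_of_dvd (by positivity) hdvd
  have hAle : A ≤ (r + 1) ^ n * n.factorial := by
    rw [← Finset.prod_range_add_one_eq_factorial, hA, ← Finset.card_range n,
      ← Finset.prod_const, Finset.card_range, ← Finset.prod_mul_distrib]
    apply Finset.prod_le_prod'
    intro k _
    nlinarith
  refine Nat.le_of_mul_le_mul_left ?_ n.factorial_pos
  calc n.factorial * ∏ q ∈ P, q ≤ A * (2 ^ n * r ^ (n / 2)) := hle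
    _ ≤ ((r + 1) ^ n * n.factorial) * (2 ^ n * r ^ (n / 2)) := Nat.mul_le_mul_right _ hAle
    _ = _ := by ring

/-! ### The prime powers attached to a fixed `r` -/

open Classical in
/-- The prime powers `q ≡ 1 [MOD r]` with `q ≤ exp (r / 2)`; the boundary case `q = exp (r / 2)`,
excluded by the strict inequality `2 log q < r`, may be kept for an upper bound. -/
noncomputable def admissible (r : ℕ) : Finset ℕ :=
  (Finset.Icc 1 ⌊Real.exp (r / 2)⌋₊).filter (fun q => IsPrimePow q ∧ r ∣ q - 1)

lemma exists_of_mem_admissible {r q : ℕ} (h : q ∈ admissible r) :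
    ∃ k, 0 < k ∧ k ≤ (⌊Real.exp (r / 2)⌋₊ - 1) / r ∧ q = r * k + 1 := by
  simp only [admissible, Finset.mem_filter, Finset.mem_Icc] at h
  obtain ⟨⟨h1, h2⟩, h3, k, hk⟩ := h
  have h4 := h3.one_lt
  have hr : 0 < r := by
    rcases Nat.eq_zero_or_pos r with rfl | h
    · omega
    · exact h
  refine ⟨k, ?_, ?_, by omega⟩
  · rcases Nat.eq_zero_or_pos k with rfl | h
    · omega
    · exact h
  · rw [Nat.le_div_iff_mul_le hr, mul_comm]
    omega

lemma cast_div_le (r : ℕ) (hr : 0 < r) :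
    (r : ℝ) * (((⌊Real.exp (r / 2)⌋₊ - 1) / r : ℕ) : ℝ) + 1 ≤ Real.exp (r / 2) := by
  have h1 : 1 ≤ ⌊Real.exp ((r : ℝ) / 2)⌋₊ := by
    rw [Nat.one_le_floor_iff]
    exact Real.one_le_exp (by positivity)
  have h2 : r * ((⌊Real.exp ((r : ℝ) / 2)⌋₊ - 1) / r) + 1 ≤ ⌊Real.exp ((r : ℝ) / 2)⌋₊ := by
    have := Nat.mul_div_le (⌊Real.exp ((r : ℝ) / 2)⌋₊ - 1) r
    omega
  calc (r : ℝ) * (((⌊Real.exp (r / 2)⌋₊ - 1) / r : ℕ) : ℝ) + 1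
      = ((r * ((⌊Real.exp ((r : ℝ) / 2)⌋₊ - 1) / r) + 1 : ℕ) : ℝ) := by push_cast; ring
    _ ≤ (⌊Real.exp ((r : ℝ) / 2)⌋₊ : ℝ) := by exact_mod_cast h2
    _ ≤ _ := Nat.floor_le (Real.exp_pos _).le

/-- The bound that ignores primality: all integers `q ≡ 1 [MOD r]` in the range are counted. -/
lemma sum_admissible_le_trivial (r : ℕ) (hr : 0 < r) :
    ∑ q ∈ admissible r, (q : ℝ) ≤
      (Real.exp r + r * Real.exp (r / 2)) / (2 * r) := by
  set x := Real.exp ((r : ℝ) / 2) with hx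
  have hxx : Real.exp r = x * x := by rw [hx, ← Real.exp_add]; congr 1; ring
  have hn := cast_div_le r hr
  set n := (⌊Real.exp ((r : ℝ) / 2)⌋₊ - 1) / r with hndef
  have hr' : (0 : ℝ) < r := by exact_mod_cast hr
  have h1 : ∑ q ∈ admissible r, (q : ℝ) ≤
      ∑ q ∈ (Finset.range n).image (fun k => r * (k + 1) + 1), (q : ℝ) := by
    apply Finset.sum_le_sum_of_subset_of_nonneg
    · intro q hq
      obtain ⟨k, hk0, hkn, rfl⟩ := exists_of_mem_admissible hq
      refine Finset.mem_image.2 ⟨k - 1, Finset.mem_range.2 (by omega), ?_⟩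
      rw [Nat.sub_add_cancel hk0]
    · intros; positivity
  have h2 : ∑ q ∈ (Finset.range n).image (fun k => r * (k + 1) + 1), (q : ℝ) =
      ∑ k ∈ Finset.range n, ((r : ℝ) * (k + 1) + 1) := by
    rw [Finset.sum_image]
    · push_cast; rfl
    · intro a _ b _ hab
      have : r * (a + 1) = r * (b + 1) := by simpa using hab
      have := Nat.eq_of_mul_eq_mul_left hr this
      omega
  have h3 : ∀ m : ℕ, ∑ k ∈ Finset.range m, ((r : ℝ) * (k + 1) + 1) =
      m * (r * m + r + 2) / 2 := by
    intro m
    induction m with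
    | zero => simp
    | succ m ih => rw [Finset.sum_range_succ, ih]; push_cast; ring
  rw [h2, h3] at h1
  refine h1.trans ?_
  rw [hxx, div_le_div_iff₀ (by norm_num) (by positivity)]
  have hx0 : 0 < x := Real.exp_pos _
  have hn0 : (0 : ℝ) ≤ n := Nat.cast_nonneg n
  have h5 : (r : ℝ) * n * (r * n + r + 2) ≤ (x - 1) * (x + r + 1) :=
    mul_le_mul (by linarith) (by linarith) (by positivity)
      (by nlinarith [mul_nonneg hr'.le hn0])
  nlinarith

/-- With `x = exp (r / 2)` and `n ≤ x / r` the number of available terms `r * k + 1`, the sum of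
`log q` over the primes `q > n` is at most about `(x / r) (3 / 2) log r`. Since `log q / q`
decreases, `q ≤ (x / log x) log q`, which turns this into a bound for the sum of the `q`. -/
lemma sum_large_primes_le (r : ℕ) (hr : 2 ≤ r) (P : Finset ℕ) (hP : P ⊆ admissible r)
    (hP' : ∀ q ∈ P, q.Prime ∧ (⌊Real.exp (r / 2)⌋₊ - 1) / r < q) :
    ∑ q ∈ P, (q : ℝ) ≤ Real.exp r / r ^ 2 *
      (2 * Real.log (r + 1) + 2 * Real.log 2 + Real.log r) := by
  set x := Real.exp ((r : ℝ) / 2) with hx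
  have hx0 : 0 < x := Real.exp_pos _
  have hxx : Real.exp r = x * x := by rw [hx, ← Real.exp_add]; congr 1; ring
  have hn := cast_div_le r (by omega)
  have hprod := prod_primes_progression_le r ((⌊x⌋₊ - 1) / r) (by omega) P
    (fun q hq => ⟨(hP' q hq).1, (hP' q hq).2, exists_of_mem_admissible (hP hq)⟩)
  set n := (⌊x⌋₊ - 1) / r with hndef
  have hr' : (2 : ℝ) ≤ r := by exact_mod_cast hr
  have hlogr : 0 ≤ Real.log r := Real.log_nonneg (by linarith)
  have hlog2 : 0 ≤ Real.log 2 := Real.log_nonneg (by norm_num)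
  have hlogr1 : 0 ≤ Real.log (r + 1) := Real.log_nonneg (by linarith)
  have hnx : (n : ℝ) ≤ x / r := by
    rw [le_div_iff₀ (by linarith)]; linarith
  have hlog : ∑ q ∈ P, Real.log q ≤
      x / r * (Real.log (r + 1) + Real.log 2 + Real.log r / 2) := by
    have h1 : ∑ q ∈ P, Real.log q = Real.log ((∏ q ∈ P, q : ℕ) : ℝ) := by
      rw [Nat.cast_prod, Real.log_prod]
      intro q hq
      exact_mod_cast (hP' q hq).1.ne_zero
    have hpos : 0 < ∏ q ∈ P, q := Finset.prod_pos fun q hq => (hP' q hq).1.pos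
    have h2 : Real.log ((∏ q ∈ P, q : ℕ) : ℝ) ≤
        Real.log (((r + 1) ^ n * (2 ^ n * r ^ (n / 2)) : ℕ) : ℝ) :=
      Real.log_le_log (by exact_mod_cast hpos) (by exact_mod_cast hprod)
    have h3 : Real.log (((r + 1) ^ n * (2 ^ n * r ^ (n / 2)) : ℕ) : ℝ) =
        n * Real.log (r + 1) + (n * Real.log 2 + (n / 2 : ℕ) * Real.log r) := by
      push_cast
      rw [Real.log_mul (by positivity) (by positivity), Real.log_mul (by positivity)
        (by positivity), Real.log_pow, Real.log_pow, Real.log_pow]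
    have h4 : ((n / 2 : ℕ) : ℝ) ≤ n / 2 := Nat.cast_div_le
    calc ∑ q ∈ P, Real.log q
        ≤ n * Real.log (r + 1) + (n * Real.log 2 + (n / 2 : ℕ) * Real.log r) := by
          rw [h1, ← h3]; exact h2
      _ ≤ n * Real.log (r + 1) + (n * Real.log 2 + (n / 2 : ℝ) * Real.log r) := by gcongr
      _ = n * (Real.log (r + 1) + Real.log 2 + Real.log r / 2) := by ring
      _ ≤ _ := by gcongr
  have hterm : ∀ q ∈ P, (q : ℝ) ≤ 2 * x / r * Real.log q := by
    intro q hq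
    have hqm := hP hq
    obtain ⟨k, hk0, -, hk⟩ := exists_of_mem_admissible hqm
    have hq3 : 3 ≤ q := by nlinarith
    -- The monotonicity of `log q / q` is only available from `exp 1 < 3` on.
    have hq3' : (3 : ℝ) ≤ q := by exact_mod_cast hq3
    have hqx : (q : ℝ) ≤ x := by
      simp only [admissible, Finset.mem_filter, Finset.mem_Icc] at hqm
      exact (Nat.le_floor_iff hx0.le).1 hqm.1.2
    have he : Real.exp 1 ≤ q := Real.exp_one_lt_three.le.trans hq3'
    have := Real.log_div_self_antitoneOn (Set.mem_Ici.2 he) (Set.mem_Ici.2 (he.trans hqx)) hqx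
    simp only at this
    rw [div_le_div_iff₀ hx0 (by linarith), hx, Real.log_exp, ← hx] at this
    rw [div_mul_eq_mul_div, le_div_iff₀ (by linarith)]
    linarith
  calc ∑ q ∈ P, (q : ℝ) ≤ ∑ q ∈ P, 2 * x / r * Real.log q := Finset.sum_le_sum hterm
    _ = 2 * x / r * ∑ q ∈ P, Real.log q := by rw [Finset.mul_sum]
    _ ≤ 2 * x / r * (x / r * (Real.log (r + 1) + Real.log 2 + Real.log r / 2)) := by gcongr
    _ = _ := by rw [hxx]; field_simp

/-- A prime power `p ^ j ≤ X` with `j ≥ 2` is determined by `p ≤ √X` and `j ≤ log₂ X`. -/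
lemma card_proper_prime_powers_le (X : ℕ) (Z : Finset ℕ)
    (hZ : ∀ q ∈ Z, q ≤ X ∧ IsPrimePow q ∧ ¬ q.Prime) :
    Z.card ≤ Nat.sqrt X * Nat.log 2 X := by
  have hsub : Z ⊆ (Finset.Icc 1 (Nat.sqrt X) ×ˢ Finset.Icc 1 (Nat.log 2 X)).image
      (fun pj => pj.1 ^ pj.2) := by
    intro q hq
    obtain ⟨hqX, hpp, hnp⟩ := hZ q hq
    obtain ⟨p, j, hp, hj, rfl⟩ := (isPrimePow_nat_iff q).1 hpp
    have hj1 : j ≠ 1 := by rintro rfl; simp [hp] at hnp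
    refine Finset.mem_image.2 ⟨(p, j), ?_, rfl⟩
    simp only [Finset.mem_product, Finset.mem_Icc]
    refine ⟨⟨hp.one_lt.le, ?_⟩, hj, ?_⟩
    · rw [Nat.le_sqrt']
      exact (Nat.pow_le_pow_right hp.pos (by omega)).trans hqX
    · exact Nat.le_log_of_pow_le one_lt_two ((Nat.pow_le_pow_left hp.two_le j).trans hqX)
  calc Z.card ≤ _ := Finset.card_le_card hsub
    _ ≤ _ := Finset.card_image_le
    _ = _ := by simp

/-- Equivalent to `r ^ 3 ≤ exp (r / 4)`; obtained from the tangent line of `log` at `64`. -/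
lemma twelve_log_le (r : ℕ) (hr : 49 ≤ r) : 12 * Real.log r ≤ r := by
  have hr' : (49 : ℝ) ≤ r := by exact_mod_cast hr
  have h1 : Real.log (r / 64) ≤ r / 64 - 1 := Real.log_le_sub_one_of_pos (by positivity)
  rw [Real.log_div (by positivity) (by norm_num)] at h1
  have h2 : Real.log 64 = 6 * Real.log 2 := by
    rw [show (64 : ℝ) = 2 ^ 6 by norm_num, Real.log_pow]; norm_num
  have := Real.log_two_lt_d9
  linarith

/-- The large primes give the main term. The `q ≤ n` and the proper prime powers, estimated by
counting, are of size at most `exp r / r ^ 2` and `0.73 * exp r / r ^ 2`. -/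
lemma sum_admissible_le (r : ℕ) (hr : 49 ≤ r) :
    ∑ q ∈ admissible r, (q : ℝ) ≤ Real.exp r / r ^ 2 * (3 * Real.log r + 3.2) := by
  classical
  set x := Real.exp ((r : ℝ) / 2) with hx
  have hx0 : 0 < x := Real.exp_pos _
  have hxx : Real.exp r = x * x := by rw [hx, ← Real.exp_add]; congr 1; ring
  have hn := cast_div_le r (by omega)
  set n := (⌊x⌋₊ - 1) / r with hndef
  have hr' : (49 : ℝ) ≤ r := by exact_mod_cast hr
  have hnx : (n : ℝ) ≤ x / r := by
    rw [le_div_iff₀ (by linarith)]; linarith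
  have hmem : ∀ q ∈ admissible r, 1 ≤ q ∧ q ≤ ⌊x⌋₊ ∧ IsPrimePow q := by
    intro q hq
    simp only [admissible, Finset.mem_filter, Finset.mem_Icc] at hq
    exact ⟨hq.1.1, hq.1.2, hq.2.1⟩
  rw [← Finset.sum_filter_add_sum_filter_not (admissible r) (fun q => q ≤ n),
    ← Finset.sum_filter_add_sum_filter_not ((admissible r).filter (fun q => ¬ q ≤ n))
      (fun q => q.Prime)]
  have hS1 : ∑ q ∈ (admissible r).filter (fun q => q ≤ n), (q : ℝ) ≤ Real.exp r / r ^ 2 := by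
    have hcard : ((admissible r).filter (fun q => q ≤ n)).card ≤ n := by
      calc _ ≤ (Finset.Icc 1 n).card := Finset.card_le_card fun q hq => by
            rw [Finset.mem_filter] at hq
            exact Finset.mem_Icc.2 ⟨(hmem q hq.1).1, hq.2⟩
        _ = n := by simp
    calc _ ≤ ((admissible r).filter (fun q => q ≤ n)).card • (n : ℝ) :=
          Finset.sum_le_card_nsmul _ _ _ fun q hq => by
            exact_mod_cast (Finset.mem_filter.1 hq).2
      _ ≤ n * n := by
          rw [nsmul_eq_mul]; gcongr
      _ ≤ (x / r) * (x / r) := by gcongr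
      _ = _ := by rw [hxx]; field_simp
  have hS2 := sum_large_primes_le r (by omega)
    (((admissible r).filter (fun q => ¬ q ≤ n)).filter (fun q => q.Prime))
    ((Finset.filter_subset _ _).trans (Finset.filter_subset _ _))
    (fun q hq => by
      simp only [Finset.mem_filter, not_le] at hq
      exact ⟨hq.2, hq.1.2⟩)
  have hS3 : ∑ q ∈ ((admissible r).filter (fun q => ¬ q ≤ n)).filter (fun q => ¬ q.Prime),
      (q : ℝ) ≤ Real.exp r / r ^ 2 * 0.73 := by
    set Z := ((admissible r).filter (fun q => ¬ q ≤ n)).filter (fun q => ¬ q.Prime)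
    have hZ : ∀ q ∈ Z, q ≤ ⌊x⌋₊ ∧ IsPrimePow q ∧ ¬ q.Prime := by
      intro q hq
      simp only [Z, Finset.mem_filter] at hq
      exact ⟨(hmem q hq.1.1).2.1, (hmem q hq.1.1).2.2, hq.2⟩
    have hcard := card_proper_prime_powers_le ⌊x⌋₊ Z hZ
    have hfl : ((⌊x⌋₊ : ℕ) : ℝ) ≤ x := Nat.floor_le hx0.le
    have hfl1 : 1 ≤ ⌊x⌋₊ := by
      rw [Nat.one_le_floor_iff]; exact Real.one_le_exp (by positivity)
    have hsqrt : ((Nat.sqrt ⌊x⌋₊ : ℕ) : ℝ) ≤ Real.exp (r / 4) := by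
      refine Real.nat_sqrt_le_real_sqrt.trans ((Real.sqrt_le_sqrt hfl).trans ?_)
      rw [Real.sqrt_le_left (Real.exp_pos _).le, hx, ← Real.exp_nat_mul]
      apply le_of_eq; congr 1; push_cast; ring
    have hlg : ((Nat.log 2 ⌊x⌋₊ : ℕ) : ℝ) ≤ 0.73 * r := by
      have h1 : (2 : ℝ) ^ (Nat.log 2 ⌊x⌋₊) ≤ x := by
        refine le_trans ?_ hfl
        exact_mod_cast Nat.pow_log_le_self 2 (by omega)
      have h2 := Real.log_le_log (by positivity) h1
      rw [Real.log_pow, hx, Real.log_exp] at h2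
      have := Real.log_two_gt_d9
      have h0 : (0 : ℝ) ≤ (Nat.log 2 ⌊x⌋₊ : ℕ) := Nat.cast_nonneg _
      nlinarith
    have hcube : (r : ℝ) ^ 3 * Real.exp (r / 4) ≤ x := by
      have : (r : ℝ) ^ 3 ≤ Real.exp (r / 4) := by
        rw [← Real.log_le_iff_le_exp (by positivity), Real.log_pow]
        have := twelve_log_le r hr
        push_cast
        linarith
      calc (r : ℝ) ^ 3 * Real.exp (r / 4) ≤ Real.exp (r / 4) * Real.exp (r / 4) := by gcongr
        _ = x := by rw [hx, ← Real.exp_add]; congr 1; ring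
    calc _ ≤ Z.card • x := Finset.sum_le_card_nsmul _ _ _ fun q hq =>
          le_trans (by exact_mod_cast (hZ q hq).1) hfl
      _ ≤ ((Nat.sqrt ⌊x⌋₊ : ℕ) * (Nat.log 2 ⌊x⌋₊ : ℕ) : ℝ) * x := by
          rw [nsmul_eq_mul]; gcongr; exact_mod_cast hcard
      _ ≤ (Real.exp (r / 4) * (0.73 * r)) * x := by gcongr
      _ = ((r : ℝ) ^ 3 * Real.exp (r / 4)) * x / r ^ 2 * 0.73 := by field_simp
      _ ≤ x * x / r ^ 2 * 0.73 := by gcongr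
      _ = _ := by rw [hxx]
  have hlog : Real.log (r + 1) ≤ Real.log r + 1 / 49 := by
    have h1 : Real.log ((r + 1) / r) ≤ (r + 1) / r - 1 :=
      Real.log_le_sub_one_of_pos (by positivity)
    rw [Real.log_div (by positivity) (by positivity)] at h1
    have h2 : ((r : ℝ) + 1) / r - 1 = 1 / r := by field_simp; ring
    have h3 : (1 : ℝ) / r ≤ 1 / 49 := by gcongr
    linarith
  have hl2 := Real.log_two_lt_d9
  have hc : (0 : ℝ) ≤ Real.exp r / r ^ 2 := by positivity
  have hfin : Real.exp r / r ^ 2 + (Real.exp r / r ^ 2 *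
      (2 * Real.log (r + 1) + 2 * Real.log 2 + Real.log r) + Real.exp r / r ^ 2 * 0.73) ≤
      Real.exp r / r ^ 2 * (3 * Real.log r + 3.2) := by
    have : Real.exp r / r ^ 2 * (1 + (2 * Real.log (r + 1) + 2 * Real.log 2 + Real.log r) + 0.73) ≤
      Real.exp r / r ^ 2 * (3 * Real.log r + 3.2) := by
      apply mul_le_mul_of_nonneg_left _ hc
      linarith
    linarith
  linarith

/-! ### Summation over `r` -/

/-- Stirling's upper bound with constant `e` in place of `√(2π)`, as the Stirling sequence
decreases from its value at `1`. -/
lemma factorial_le_stirling (r : ℕ) (hr : 0 < r) :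
    (r.factorial : ℝ) / (r : ℝ) ^ r ≤ Real.exp 1 * √r * Real.exp (-r) := by
  obtain ⟨m, rfl⟩ : ∃ m, r = m + 1 := ⟨r - 1, by omega⟩
  have h := Stirling.stirlingSeq'_antitone (Nat.zero_le m)
  simp only [Function.comp, Nat.succ_eq_add_one, zero_add, Stirling.stirlingSeq_one] at h
  unfold Stirling.stirlingSeq at h
  set R : ℝ := ((m + 1 : ℕ) : ℝ) with hR
  have hRpos : 0 < R := by rw [hR]; positivity
  rw [Real.sqrt_mul (by norm_num), div_le_iff₀ (by positivity), div_pow, ← Real.exp_nat_mul,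
    mul_one] at h
  rw [div_le_iff₀ (by positivity), Real.exp_neg]
  refine h.trans (le_of_eq ?_)
  rw [← hR]
  have h2 : (0 : ℝ) < √2 := by positivity
  field_simp

/-- The contribution of a fixed `r` to the double sum. -/
noncomputable def rowSum (r : ℕ) : ℝ :=
  (r.factorial : ℝ) / (r : ℝ) ^ r * ∑ q ∈ admissible r, (q : ℝ)

lemma rowSum_le_trivial (r : ℕ) (hr : 0 < r) :
    rowSum r ≤ (r.factorial : ℝ) / (r : ℝ) ^ r *
      ((2.7183 ^ r + (r : ℝ) * 1.6488 ^ r) / (2 * (r : ℝ))) := by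
  have he := Real.exp_one_lt_d9
  have h1 : Real.exp r ≤ 2.7183 ^ r := by
    rw [show (r : ℝ) = r * 1 by ring, Real.exp_nat_mul]
    exact pow_le_pow_left₀ (Real.exp_pos _).le (by linarith) r
  have h2 : Real.exp ((r : ℝ) / 2) ≤ 1.6488 ^ r := by
    rw [show (r : ℝ) / 2 = r * (1 / 2) by ring, Real.exp_nat_mul]
    refine pow_le_pow_left₀ (Real.exp_pos _).le ?_ r
    apply le_of_sq_le_sq _ (by norm_num)
    rw [← Real.exp_nat_mul]
    norm_num
    linarith
  unfold rowSum
  have h3 := sum_admissible_le_trivial r hr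
  gcongr
  refine h3.trans ?_
  gcongr

/-- The telescoping majorant of the tail over `r`. -/
noncomputable def tailBound (t : ℝ) : ℝ := Real.exp 1 * (6 * Real.log t + 19) / √t

lemma rowSum_le_sub (r : ℕ) (hr : 49 ≤ r) :
    rowSum r ≤ tailBound (r - 1) - tailBound r := by
  have hr' : (49 : ℝ) ≤ r := by exact_mod_cast hr
  have h1 : rowSum r ≤ Real.exp 1 * ((3 * Real.log r + 3.2) / (√r * r)) := by
    calc rowSum r ≤ (Real.exp 1 * √r * Real.exp (-r)) *
          (Real.exp r / r ^ 2 * (3 * Real.log r + 3.2)) := by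
          unfold rowSum
          have := factorial_le_stirling r (by omega)
          have := sum_admissible_le r hr
          gcongr
      _ = _ := by
          rw [Real.exp_neg]
          have hs : (r : ℝ) = √r * √r := (Real.mul_self_sqrt (by positivity)).symm
          have : (0 : ℝ) < √r := by positivity
          field_simp
          rw [Real.sq_sqrt (by positivity)]
  refine h1.trans ?_
  unfold tailBound
  rw [mul_div_assoc, mul_div_assoc, ← mul_sub]
  apply mul_le_mul_of_nonneg_left _ (Real.exp_pos 1).le
  -- With `s = √r` and `u = √(r - 1)`, the difference of the majorant is estimated using
  -- `log (r - 1) ≥ log r - 1 / (r - 1)` and `1 / u - 1 / s ≥ 1 / (2 s ^ 3)`.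
  set L := Real.log r with hL
  have hL0 : 0 ≤ L := Real.log_nonneg (by linarith)
  have hlog : L - 1 / (r - 1) ≤ Real.log (r - 1) := by
    have h1 : Real.log (r / (r - 1)) ≤ r / (r - 1) - 1 :=
      Real.log_le_sub_one_of_pos (div_pos (by linarith) (by linarith))
    rw [Real.log_div (by positivity) (by linarith)] at h1
    have h2 : (r : ℝ) / (r - 1) - 1 = 1 / (r - 1) := by
      have : (r : ℝ) - 1 ≠ 0 := by linarith
      field_simp; ring
    linarith
  set s := √(r : ℝ) with hs
  set u := √((r : ℝ) - 1) with hu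
  have hss : s ^ 2 = r := Real.sq_sqrt (by positivity)
  have huu : u ^ 2 = r - 1 := Real.sq_sqrt (by linarith)
  have hs0 : 0 < s := Real.sqrt_pos.2 (by linarith)
  have hu0 : 0 < u := Real.sqrt_pos.2 (by linarith)
  have hdiff : 1 / (2 * (s * r)) ≤ 1 / u - 1 / s := by
    have hus : u ≤ s := Real.sqrt_le_sqrt (by linarith)
    rw [div_sub_div _ _ hu0.ne' hs0.ne', div_le_div_iff₀ (by positivity) (by positivity), ← hss]
    have h3 : (s - u) * (s + u) = 1 := by nlinarith
    have h4 : 1 ≤ (s - u) * (2 * s) := by nlinarith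
    nlinarith [mul_le_mul_of_nonneg_right h4 (by positivity : 0 ≤ s * s),
      mul_le_mul_of_nonneg_right hus hs0.le]
  have hratio : 1 / ((r - 1) * u) ≤ 1.05 * (1 / (s * r)) := by
    have h3 : s * r ≤ 1.05 * ((r - 1) * u) := by
      rw [← abs_of_nonneg (by positivity : 0 ≤ s * (r : ℝ)),
        ← abs_of_nonneg (by have : (0 : ℝ) ≤ r - 1 := by linarith
                            positivity : 0 ≤ 1.05 * (((r : ℝ) - 1) * u))]
      apply sq_le_sq.1
      have e1 : (s * r) ^ 2 = (r : ℝ) ^ 3 := by rw [mul_pow, hss]; ring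
      have e2 : (1.05 * (((r : ℝ) - 1) * u)) ^ 2 = 1.05 ^ 2 * (r - 1) ^ 3 := by
        rw [mul_pow, mul_pow, huu]; ring
      rw [e1, e2]
      have h5 : (r : ℝ) ≤ 49 / 48 * (r - 1) := by linarith
      have h7 : (0 : ℝ) ≤ (r : ℝ) - 1 := by linarith
      calc (r : ℝ) ^ 3 ≤ (49 / 48 * ((r : ℝ) - 1)) ^ 3 := by gcongr
        _ = (49 / 48) ^ 3 * ((r : ℝ) - 1) ^ 3 := by ring
        _ ≤ 1.05 ^ 2 * ((r : ℝ) - 1) ^ 3 := by gcongr; norm_num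
    have h6 : (0 : ℝ) < (r - 1) * u := mul_pos (by linarith) hu0
    rw [mul_one_div, div_le_div_iff₀ h6 (by positivity)]
    linarith
  have hA : (6 * (L - 1 / (r - 1)) + 19) / u ≤ (6 * Real.log (r - 1) + 19) / u := by gcongr
  have hB : (6 * (L - 1 / (r - 1)) + 19) / u =
      (6 * L + 19) * (1 / u) - 6 * (1 / ((r - 1) * u)) := by
    have : (r : ℝ) - 1 ≠ 0 := by linarith
    field_simp
    ring
  have hC : (6 * L + 19) * (1 / (2 * (s * r))) ≤ (6 * L + 19) * (1 / u - 1 / s) :=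
    mul_le_mul_of_nonneg_left hdiff (by linarith)
  have hD : (6 * L + 19) * (1 / (2 * (s * r))) = (3 * L + 9.5) * (1 / (s * r)) := by
    field_simp; ring
  have hE : (3 * L + 3.2) / (s * r) = (3 * L + 3.2) * (1 / (s * r)) := by ring
  have hF : (6 * L + 19) / s = (6 * L + 19) * (1 / s) := by ring
  have hpos : 0 < 1 / (s * r) := by positivity
  rw [hE, hF]
  nlinarith

lemma tailBound_forty_eight_le : tailBound 48 ≤ 18 := by
  unfold tailBound
  have he := Real.exp_one_lt_d9
  have h2 := Real.log_two_lt_d9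
  have hlog : Real.log 48 ≤ 6 * Real.log 2 := by
    rw [← Real.log_rpow (by norm_num)]
    exact Real.log_le_log (by norm_num) (by norm_num)
  have hs : (6.9 : ℝ) ≤ √48 := Real.le_sqrt_of_sq_le (by norm_num)
  rw [div_le_iff₀ (by positivity)]
  calc Real.exp 1 * (6 * Real.log 48 + 19) ≤ 2.7183 * (6 * (6 * 0.6932) + 19) := by
        gcongr <;> linarith
    _ ≤ 18 * 6.9 := by norm_num
    _ ≤ _ := by gcongr

/-- The rows `r ≤ 48`, by evaluating the bound that ignores primality. -/
lemma sum_rowSum_first : ∑ i ∈ Finset.range 48, rowSum (i + 1) ≤ 19 := by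
  refine (Finset.sum_le_sum fun i _ => rowSum_le_trivial (i + 1) (Nat.succ_pos i)).trans ?_
  simp only [Finset.sum_range_succ, Finset.sum_range_zero, Nat.factorial]
  norm_num

lemma rowSum_nonneg (r : ℕ) : 0 ≤ rowSum r := by unfold rowSum; positivity

lemma sum_rowSum_le (N : ℕ) : ∑ i ∈ Finset.range N, rowSum (i + 1) ≤ 37 := by
  have key : ∀ N, 48 ≤ N →
      ∑ i ∈ Finset.range N, rowSum (i + 1) ≤ 19 + tailBound 48 - tailBound N := by
    intro N hN
    induction N, hN using Nat.le_induction with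
    | base => have := sum_rowSum_first; push_cast; linarith
    | succ m hm ih =>
      rw [Finset.sum_range_succ]
      have := rowSum_le_sub (m + 1) (by omega)
      push_cast at this ⊢
      rw [add_sub_cancel_right] at this
      linarith
  have hmono : ∑ i ∈ Finset.range N, rowSum (i + 1) ≤
      ∑ i ∈ Finset.range (N + 48), rowSum (i + 1) :=
    Finset.sum_le_sum_of_subset_of_nonneg (by
      intro i; simp only [Finset.mem_range]; omega) fun i _ _ => rowSum_nonneg _
  have h := key (N + 48) (by omega)
  have h48 := tailBound_forty_eight_le
  have hpos : 0 ≤ tailBound ((N + 48 : ℕ) : ℝ) := by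
    unfold tailBound
    have := Real.log_natCast_nonneg (N + 48)
    positivity
  linarith

lemma finite_sum_le (u : Finset HeuristicPairs) :
    ∑ x ∈ u, HeuristicSummand x ≤ 37 := by
  classical
  set M := u.sup (fun x => x.1.2) with hM
  have hmaps : ∀ x ∈ u, x.1.2 - 1 ∈ Finset.range M := by
    intro x hx
    have h1 : x.1.2 ≤ M := Finset.le_sup (f := fun x : HeuristicPairs => x.1.2) hx
    have h2 : 0 < x.1.2 := x.2.2.1
    rw [Finset.mem_range]
    omega
  rw [← Finset.sum_fiberwise_of_maps_to hmaps]
  refine (Finset.sum_le_sum fun i _ => ?_).trans (sum_rowSum_le M)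
  have hfib : ∀ x ∈ u.filter (fun x => x.1.2 - 1 = i), x.1.2 = i + 1 := by
    intro x hx
    have h1 := (Finset.mem_filter.1 hx).2
    have h2 : 0 < x.1.2 := x.2.2.1
    omega
  have hinj : Set.InjOn (fun x : HeuristicPairs => x.1.1)
      (u.filter (fun x => x.1.2 - 1 = i)) := by
    intro x hx y hy hxy
    exact Subtype.ext (Prod.ext hxy ((hfib x hx).trans (hfib y hy).symm))
  calc ∑ x ∈ u.filter (fun x => x.1.2 - 1 = i), HeuristicSummand x
      = ∑ x ∈ u.filter (fun x => x.1.2 - 1 = i),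
          ((i + 1).factorial : ℝ) / ((i + 1 : ℕ) : ℝ) ^ (i + 1) * (x.1.1 : ℝ) := by
        refine Finset.sum_congr rfl fun x hx => ?_
        rw [HeuristicSummand, hfib x hx]
        ring
    _ = ((i + 1).factorial : ℝ) / ((i + 1 : ℕ) : ℝ) ^ (i + 1) *
          ∑ q ∈ (u.filter (fun x => x.1.2 - 1 = i)).image (fun x => x.1.1), ((q : ℕ) : ℝ) := by
        rw [Finset.sum_image hinj, Finset.mul_sum]
    _ ≤ rowSum (i + 1) := by
        unfold rowSum
        refine mul_le_mul_of_nonneg_left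
          (Finset.sum_le_sum_of_subset_of_nonneg ?_ fun _ _ _ => Nat.cast_nonneg _)
          (by positivity)
        intro q hq
        obtain ⟨x, hx, rfl⟩ := Finset.mem_image.1 hq
        obtain ⟨hpp, -, hdvd, hlog⟩ := x.2
        rw [hfib x hx] at hdvd hlog
        simp only [admissible, Finset.mem_filter, Finset.mem_Icc]
        refine ⟨⟨hpp.pos, Nat.le_floor ?_⟩, hpp, hdvd⟩
        rw [← Real.log_le_iff_le_exp (by exact_mod_cast hpp.pos)]
        linarith

/-- The double sum `E = Σ_q Σ_r q·(r!/r^r)`, over prime powers `q` and positive divisors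
`r` of `q-1` with `r > 2 log q`, converges and is less than `40`. -/
theorem heuristic_sum_finite_and_lt_forty :
    Summable (fun x : HeuristicPairs => HeuristicSummand x) ∧
      ∑' x : HeuristicPairs, HeuristicSummand x < 40 := by
  have hnonneg : 0 ≤ fun x : HeuristicPairs => HeuristicSummand x := fun x => by
    simp only [Pi.zero_apply, HeuristicSummand]
    positivity
  exact ⟨summable_of_sum_le hnonneg finite_sum_le,
    (Real.tsum_le_of_sum_le hnonneg finite_sum_le).trans_lt (by norm_num)⟩
end

section
/- In the finite field F_343 with 343 = 7^3 elements, the polynomial x^{10} + 3x (where 3 denotes 1+1+1 in F_343) permutes F_343; moreover gcd(10 − 1, 343 − 1) = 9 < √343 − 1, so the bound gcd(m−n, p−1) > √p − 1 for permutation binomials x^m + a x^n over prime fields fails over this nonprime field. -/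
/-! Since `2 ^ 114 = 1` in a field `F` with 343 elements and `Fˣ` is cyclic of order `342`, there is
`α` with `α ^ 3 = 2` (`exists_cbrt_two`). The form `a³ + 2b³ + 4c³ - 6abc`, the norm of
`a + bα + cα²`, has only the trivial zero over `𝔽₇`, so by counting every element of `F` is uniquely
of this form (`ofTriple_surjective`), and arithmetic in `F` is computable on triples over `𝔽₇`.

For injectivity, let `x ^ 10 + 3 x = y ^ 10 + 3 y` with `x ≠ 0` and `y = t x`. Then
`x ^ 9 (t ^ 10 - 1) = -3 (t - 1)`, and raising to the power `38 = 342 / 9` removes `x`: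
`(t ^ 10 - 1) ^ 38 = 2 (t - 1) ^ 38`. A check over the 343 triples shows that the only solution
is `t = 1`.
-/

namespace CubicModel

/-- The triple `(a, b, c)` stands for `a + b α + c α²`, where `α³ = 2`. -/
abbrev Triple := ZMod 7 × ZMod 7 × ZMod 7

/-- Multiplication of triples modulo the relation `α³ = 2`. -/
def mul (p q : Triple) : Triple :=
  (p.1 * q.1 + 2 * (p.2.1 * q.2.2 + p.2.2 * q.2.1),
   p.1 * q.2.1 + p.2.1 * q.1 + 2 * (p.2.2 * q.2.2),
   p.1 * q.2.2 + p.2.1 * q.2.1 + p.2.2 * q.1)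

def sq (p : Triple) : Triple := mul p p

def pow10 (p : Triple) : Triple := sq (mul p (sq (sq p)))

def pow38 (p : Triple) : Triple := sq (mul (mul p (sq p)) (sq (sq (sq (sq p)))))

def subOne (p : Triple) : Triple := (p.1 - 1, p.2.1, p.2.2)

/-- Multiplication by the scalar `2`. -/
def double (p : Triple) : Triple := (2 * p.1, 2 * p.2.1, 2 * p.2.2)

/-- The norm form of `𝔽₇(∛2)` is anisotropic, as 2 is not a cube modulo 7. -/
theorem norm_eq_zero : ∀ a b c : ZMod 7,
    a ^ 3 + 2 * b ^ 3 + 4 * c ^ 3 - 6 * a * b * c = 0 → a = 0 ∧ b = 0 ∧ c = 0 := by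
  decide +kernel

/-- The equation `(t ^ 10 - 1) ^ 38 = 2 (t - 1) ^ 38` forces `t = 1`, on triples. -/
theorem eq_one_of_pow38 : ∀ a b c : ZMod 7,
    pow38 (subOne (pow10 (a, b, c))) = double (pow38 (subOne (a, b, c))) →
      a = 1 ∧ b = 0 ∧ c = 0 := by
  decide +kernel

section

variable {F : Type} [Field F] [Algebra (ZMod 7) F]

/-- The element `a + b α + c α²` of `F`. -/
def ofTriple (α : F) (p : Triple) : F :=
  algebraMap (ZMod 7) F p.1 + algebraMap (ZMod 7) F p.2.1 * α + algebraMap (ZMod 7) F p.2.2 * α ^ 2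

variable {α : F}

theorem ofTriple_mul (hα : α ^ 3 = 2) (p q : Triple) :
    ofTriple α (mul p q) = ofTriple α p * ofTriple α q := by
  simp only [ofTriple, mul, map_add, map_mul, map_ofNat]
  linear_combination (-(algebraMap (ZMod 7) F p.2.1 * algebraMap (ZMod 7) F q.2.2
    + algebraMap (ZMod 7) F p.2.2 * algebraMap (ZMod 7) F q.2.1)
    - algebraMap (ZMod 7) F p.2.2 * algebraMap (ZMod 7) F q.2.2 * α) * hα

theorem ofTriple_pow10 (hα : α ^ 3 = 2) (p : Triple) :
    ofTriple α (pow10 p) = ofTriple α p ^ 10 := by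
  simp only [pow10, sq, ofTriple_mul hα]; ring

theorem ofTriple_pow38 (hα : α ^ 3 = 2) (p : Triple) :
    ofTriple α (pow38 p) = ofTriple α p ^ 38 := by
  simp only [pow38, sq, ofTriple_mul hα]; ring

theorem ofTriple_subOne (p : Triple) : ofTriple α (subOne p) = ofTriple α p - 1 := by
  simp only [ofTriple, subOne, map_sub, map_one]; ring

theorem ofTriple_double (p : Triple) : ofTriple α (double p) = 2 * ofTriple α p := by
  simp only [ofTriple, double, map_mul, map_ofNat]; ring

theorem ofTriple_injective (hα : α ^ 3 = 2) : Function.Injective (ofTriple α) := by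
  rintro ⟨a, b, c⟩ ⟨a', b', c'⟩ h
  have key : (a - a') ^ 3 + 2 * (b - b') ^ 3 + 4 * (c - c') ^ 3
      - 6 * (a - a') * (b - b') * (c - c') = 0 := by
    have : Fact (Nat.Prime 7) := ⟨by norm_num⟩
    apply (algebraMap (ZMod 7) F).injective
    simp only [ofTriple] at h
    simp only [map_add, map_sub, map_mul, map_pow, map_ofNat, map_zero]
    generalize algebraMap (ZMod 7) F a = A at *
    generalize algebraMap (ZMod 7) F b = B at *
    generalize algebraMap (ZMod 7) F c = C at *
    generalize algebraMap (ZMod 7) F a' = A' at *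
    generalize algebraMap (ZMod 7) F b' = B' at *
    generalize algebraMap (ZMod 7) F c' = C' at *
    obtain ⟨u, hu⟩ : ∃ u, u = A - A' := ⟨_, rfl⟩
    obtain ⟨v, hv⟩ : ∃ v, v = B - B' := ⟨_, rfl⟩
    obtain ⟨w, hw⟩ : ∃ w, w = C - C' := ⟨_, rfl⟩
    have h0 : u + v * α + w * α ^ 2 = 0 := by
      rw [hu, hv, hw]; linear_combination h
    rw [← hu, ← hv, ← hw]
    -- `X³ + Y³ + Z³ - 3XYZ` with `X = u`, `Y = vα`, `Z = wα²` is divisible by `X + Y + Z`.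
    linear_combination (u ^ 2 + v ^ 2 * α ^ 2 + w ^ 2 * α ^ 4 - u * v * α - u * w * α ^ 2
      - v * w * α ^ 3) * h0 - (v ^ 3 + w ^ 3 * (α ^ 3 + 2) - 3 * u * v * w) * hα
  obtain ⟨h1, h2, h3⟩ := norm_eq_zero _ _ _ key
  rw [sub_eq_zero.1 h1, sub_eq_zero.1 h2, sub_eq_zero.1 h3]

theorem ofTriple_surjective [Fintype F] (hcard : Fintype.card F = 343) (hα : α ^ 3 = 2) :
    Function.Surjective (ofTriple α) := by
  refine ((Fintype.bijective_iff_injective_and_card _).2 ⟨ofTriple_injective hα, ?_⟩).2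
  simp [hcard, ZMod.card]

end

theorem charP_seven (F : Type) [Field F] [Fintype F] (hcard : Fintype.card F = 343) :
    CharP F 7 := by
  obtain ⟨p, hp⟩ := CharP.exists F
  obtain ⟨n, hprime, hn⟩ := FiniteField.card F p
  have h : p ∣ 7 ^ 3 := by
    rw [show 7 ^ 3 = 343 from rfl, ← hcard, hn]
    exact dvd_pow_self _ n.ne_zero
  have h7 : p = 7 := (Nat.prime_dvd_prime_iff_eq hprime (by norm_num)).1 (hprime.dvd_of_dvd_pow h)
  exact h7 ▸ hp

theorem exists_cbrt_two (F : Type) [Field F] [Fintype F] (hcard : Fintype.card F = 343)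
    (h7 : (7 : F) = 0) : ∃ α : F, α ^ 3 = 2 := by
  classical
  have h8 : (2 : F) ^ 3 = 1 := by linear_combination h7
  have h2 : (2 : F) ≠ 0 := by
    intro h
    rw [h] at h8
    norm_num at h8
  obtain ⟨g, hg⟩ := IsCyclic.exists_generator (α := Fˣ)
  obtain ⟨k, hk⟩ := mem_powers_iff_mem_zpowers.2 (hg (Units.mk0 2 h2))
  have hord : orderOf g = 342 := by
    rw [orderOf_eq_card_of_forall_mem_zpowers hg, Nat.card_eq_fintype_card, Fintype.card_units,
      hcard]
  have hk' : (g : F) ^ k = 2 := by simpa using congrArg Units.val hk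
  have h1 : g ^ (k * 114) = 1 := by
    apply Units.ext
    rw [Units.val_pow_eq_pow_val, pow_mul, hk', Units.val_one, show 114 = 3 * 38 from rfl, pow_mul,
      h8, one_pow]
  have hdvd := orderOf_dvd_of_pow_eq_one h1
  rw [hord] at hdvd
  obtain ⟨m, rfl⟩ : 3 ∣ k := by omega
  exact ⟨(g : F) ^ m, by rw [← pow_mul, mul_comm, hk']⟩

/-- If `y = t x` and `x ≠ 0`, the equation eliminates `x` on taking 38th powers, since
`x ^ (9 * 38) = 1`. -/
theorem injective (F : Type) [Field F] [Fintype F] (hcard : Fintype.card F = 343) :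
    Function.Injective (fun x : F => x ^ 10 + (3 : F) * x) := by
  have := charP_seven F hcard
  let _ : Algebra (ZMod 7) F := ZMod.algebra F 7
  have h7 : (7 : F) = 0 := by exact_mod_cast CharP.cast_eq_zero F 7
  obtain ⟨α, hα⟩ := exists_cbrt_two F hcard h7
  have main : ∀ x t : F, x ≠ 0 → x ^ 10 + 3 * x = (t * x) ^ 10 + 3 * (t * x) → t = 1 := by
    intro x t hx h
    have h342 : (x ^ 9) ^ 38 = 1 := by
      rw [← pow_mul]
      simpa [hcard] using FiniteField.pow_card_sub_one_eq_one x hx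
    have h1 : x ^ 9 * (t ^ 10 - 1) = -3 * (t - 1) := by
      apply mul_left_cancel₀ hx
      linear_combination -h
    have h3 : (-3 : F) ^ 38 = 2 := by
      have h27 : (-3 : F) ^ 3 = 1 := by linear_combination -4 * h7
      calc (-3 : F) ^ 38 = ((-3) ^ 3) ^ 12 * (-3) ^ 2 := by ring
        _ = 2 := by rw [h27]; linear_combination h7
    have h38 : (t ^ 10 - 1) ^ 38 = 2 * (t - 1) ^ 38 := by
      have := congrArg (· ^ 38) h1
      simpa only [mul_pow, h342, h3, one_mul] using this
    obtain ⟨⟨a, b, c⟩, rfl⟩ := ofTriple_surjective hcard hα t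
    rw [← ofTriple_pow10 hα, ← ofTriple_subOne, ← ofTriple_subOne, ← ofTriple_pow38 hα,
      ← ofTriple_pow38 hα, ← ofTriple_double] at h38
    obtain ⟨rfl, rfl, rfl⟩ := eq_one_of_pow38 a b c (ofTriple_injective hα h38)
    simp [ofTriple]
  intro x y h
  have h' : x ^ 10 + 3 * x = y ^ 10 + 3 * y := h
  by_cases hx : x = 0
  · by_contra hxy
    have hy : y ≠ 0 := fun hy => hxy (hx.trans hy.symm)
    exact zero_ne_one (main y 0 hy (by rw [← h', hx]; ring))
  · have ht : y / x * x = y := div_mul_cancel₀ y hx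
    have := main x (y / x) hx (by rw [ht, h'])
    rw [this, one_mul] at ht
    exact ht

end CubicModel

/-- In the finite field with `343 = 7^3` elements, the polynomial `x^10 + 3x` is a
permutation polynomial, yet `gcd(10 - 1, 343 - 1) = 9 < √343 - 1`; so the prime-field
bound `gcd(m-n, p-1) > √p - 1` for permutation binomials fails over this nonprime field. -/
theorem counterexample_over_F343 (F : Type) [Field F] [Fintype F]
    (hcard : Fintype.card F = 343) :
    Function.Bijective (fun x : F => x ^ 10 + (3 : F) * x) ∧
      Nat.gcd (10 - 1) (343 - 1) = 9 ∧
      ((Nat.gcd (10 - 1) (343 - 1) : ℝ) < Real.sqrt 343 - 1) := by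
  refine ⟨Finite.injective_iff_bijective.1 (CubicModel.injective F hcard), by norm_num, ?_⟩
  have h9 : Nat.gcd (10 - 1) (343 - 1) = 9 := by norm_num
  have h : (10 : ℝ) < Real.sqrt 343 := Real.lt_sqrt_of_sq_lt (by norm_num)
  rw [h9]
  push_cast
  linarith
end
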